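/- Let n ≥ 1, s ∈ (0,1), and β ∈ (0, 2s). For x ∈ ℝⁿ \ {0} define J(x) := ∫_{ℝⁿ} (|x+z|^β + |x−z|^β − 2|x|^β) |z|^{−n−2s} dz. Then for every x ≠ 0 the integrand is Lebesgue integrable on ℝⁿ, and there exists a constant C ∈ ℝ (depending only on n, s, β) such that J(x) = C |x|^{β−2s} for all x ≠ 0. In particular J is homogeneous of degree β − 2s and rotation invariant. -/

import Mathlib

open MeasureTheory

noncomputable section

open Set Filter Topology

/-- Second differences of `‖·‖^β` are `O(‖z‖²)` near `x ≠ 0`. -/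
theorem second_diff_bound {n : ℕ} (β : ℝ) (x : EuclideanSpace ℝ (Fin n)) (hx : x ≠ 0) :
    ∃ r > 0, ∃ K ≥ 0, ∀ z : EuclideanSpace ℝ (Fin n), ‖z‖ < r →
      |‖x + z‖ ^ β + ‖x - z‖ ^ β - 2 * ‖x‖ ^ β| ≤ K * ‖z‖ ^ 2 := by
  have hc : ContDiffAt ℝ ⊤ (fun y : EuclideanSpace ℝ (Fin n) => ‖y‖ ^ β) x :=
    (contDiffAt_norm ℝ hx).rpow_const_of_ne (norm_ne_zero_iff.2 hx)
  obtain ⟨p, hp⟩ := hc.analyticAt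
  obtain ⟨K, hK0, hK⟩ := (hp.isBigO_sub_partialSum_pow 2).exists_nonneg
  obtain ⟨r, hr, hb⟩ := Metric.eventually_nhds_iff.1 hK.bound
  refine ⟨r, hr, 2 * K, by positivity, fun z hz => ?_⟩
  have h1 := hb (y := z) (by simpa using hz)
  have h2 := hb (y := -z) (by simpa using hz)
  have hneg : (p 1) (fun _ => -z) = -(p 1) (fun _ => z) := by
    have := (p 1).map_smul_univ (fun _ => (-1 : ℝ)) (fun _ => z)
    simpa using this
  simp only [FormalMultilinearSeries.partialSum, Finset.sum_range_succ, Finset.sum_range_zero,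
    hp.coeff_zero, hneg, norm_neg, ← sub_eq_add_neg, zero_add, Real.norm_eq_abs, abs_pow,
    abs_norm] at h1 h2
  rw [abs_le] at *
  constructor <;> linarith [h1.1, h1.2, h2.1, h2.2]

theorem integrable_majorant {n : ℕ} (hn : 1 ≤ n) (s β r : ℝ) (hs1 : s < 1)
    (hβ2s : β < 2 * s) (hr : 0 < r) :
    Integrable (fun z : EuclideanSpace ℝ (Fin n) =>
      (fun t : ℝ => if t < r then t ^ (2 - (n : ℝ) - 2 * s) else t ^ (β - (n : ℝ) - 2 * s)) ‖z‖) := by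
  have : Nonempty (Fin n) := ⟨⟨0, hn⟩⟩
  refine (integrable_fun_norm_addHaar volume (f := fun t : ℝ =>
    if t < r then t ^ (2 - (n : ℝ) - 2 * s) else t ^ (β - (n : ℝ) - 2 * s))).2 ?_
  have hpow : ∀ t : ℝ, 0 < t → ∀ a : ℝ,
      t ^ (n - 1) • t ^ (a - (n : ℝ) - 2 * s) = t ^ (a - 1 - 2 * s) := by
    intro t ht a
    rw [smul_eq_mul, ← Real.rpow_natCast, ← Real.rpow_add ht]
    congr 1
    push_cast [hn]
    ring
  rw [finrank_euclideanSpace_fin, ← Ioo_union_Ici_eq_Ioi hr]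
  refine IntegrableOn.union ?_ ?_
  · have h := (intervalIntegral.integrableOn_Ioo_rpow_iff (s := 2 - 1 - 2 * s) hr).2 (by linarith)
    refine h.congr_fun (fun t ht => ?_) measurableSet_Ioo
    simp only [if_pos ht.2]
    exact (hpow t ht.1 2).symm
  · rw [integrableOn_Ici_iff_integrableOn_Ioi]
    have h := integrableOn_Ioi_rpow_of_lt (a := β - 1 - 2 * s) (by linarith) hr
    refine h.congr_fun (fun t ht => ?_) measurableSet_Ioi
    simp only [if_neg (not_lt.2 (le_of_lt (mem_Ioi.1 ht)))]
    exact (hpow t (hr.trans ht) β).symm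

theorem integrand_integrable {n : ℕ} (hn : 1 ≤ n) (s β : ℝ) (hs1 : s < 1) (hβ0 : 0 < β)
    (hβ2s : β < 2 * s) (x : EuclideanSpace ℝ (Fin n)) (hx : x ≠ 0) :
    Integrable (fun z : EuclideanSpace ℝ (Fin n) =>
        (‖x + z‖ ^ β + ‖x - z‖ ^ β - 2 * ‖x‖ ^ β) * ‖z‖ ^ (-(n : ℝ) - 2 * s)) := by
  obtain ⟨r, hr, K, hK, hb⟩ := second_diff_bound β x hx
  set A : ℝ := (‖x‖ / r + 1) ^ β with hA
  have hA0 : 0 ≤ A := by positivity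
  refine ((integrable_majorant hn s β r hs1 hβ2s hr).const_mul (K + 4 * A)).mono' ?_ ?_
  · refine Measurable.aestronglyMeasurable ?_
    fun_prop
  refine Eventually.of_forall fun z => ?_
  rw [norm_mul, Real.norm_eq_abs, Real.norm_of_nonneg (by positivity)]
  rcases eq_or_ne z 0 with rfl | hz
  · have : ‖x + 0‖ ^ β + ‖x - 0‖ ^ β - 2 * ‖x‖ ^ β = 0 := by simp; ring
    rw [this]
    simp only [abs_zero, zero_mul, norm_zero, if_pos hr]
    positivity
  have hz0 : 0 < ‖z‖ := norm_pos_iff.2 hz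
  dsimp only
  split_ifs with h
  · calc _ ≤ (K * ‖z‖ ^ 2) * ‖z‖ ^ (-(n : ℝ) - 2 * s) := by gcongr; exact hb z h
      _ = K * ‖z‖ ^ (2 - (n : ℝ) - 2 * s) := by
          rw [mul_assoc, ← Real.rpow_natCast, ← Real.rpow_add hz0]
          congr 2
          push_cast; ring
      _ ≤ _ := by gcongr; linarith
  · have hle : ‖x‖ + ‖z‖ ≤ (‖x‖ / r + 1) * ‖z‖ := by
      have : ‖x‖ ≤ ‖x‖ / r * ‖z‖ := by
        rw [div_mul_eq_mul_div, le_div_iff₀ hr]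
        exact mul_le_mul_of_nonneg_left (not_lt.1 h) (norm_nonneg _)
      linarith
    have key : ∀ y : ℝ, 0 ≤ y → y ≤ ‖x‖ + ‖z‖ → y ^ β ≤ A * ‖z‖ ^ β := by
      intro y hy hyl
      rw [hA, ← Real.mul_rpow (by positivity) (by positivity)]
      exact Real.rpow_le_rpow hy (hyl.trans hle) hβ0.le
    have k1 := key _ (norm_nonneg (x + z)) (norm_add_le _ _)
    have k2 := key _ (norm_nonneg (x - z)) (norm_sub_le _ _)
    have k3 := key _ (norm_nonneg x) (by linarith)
    have p1 : 0 ≤ ‖x + z‖ ^ β := by positivity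
    have p2 : 0 ≤ ‖x - z‖ ^ β := by positivity
    have p3 : 0 ≤ ‖x‖ ^ β := by positivity
    calc _ ≤ (4 * A * ‖z‖ ^ β) * ‖z‖ ^ (-(n : ℝ) - 2 * s) := by
          gcongr
          rw [abs_le]
          constructor <;> linarith
      _ = (4 * A) * ‖z‖ ^ (β - (n : ℝ) - 2 * s) := by
          rw [mul_assoc, ← Real.rpow_add hz0]
          congr 2
          ring
      _ ≤ _ := by gcongr; linarith

/-- **Homogeneity of the fractional Laplacian of a power.**  For `β ∈ (0,2s)` the
symmetric second-difference integral
`J(x) = ∫ (|x+z|^β + |x−z|^β − 2|x|^β) |z|^{−n−2s} dz` converges absolutely for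
every `x ≠ 0`, and `J(x) = C |x|^{β−2s}` for a constant `C` depending only on
`n, s, β`. -/
theorem frac_laplacian_power_homogeneous
    (n : ℕ) (hn : 1 ≤ n) (s β : ℝ)
    (hs0 : 0 < s) (hs1 : s < 1) (hβ0 : 0 < β) (hβ2s : β < 2 * s) :
    (∀ x : EuclideanSpace ℝ (Fin n), x ≠ 0 →
      Integrable (fun z : EuclideanSpace ℝ (Fin n) =>
        (‖x + z‖ ^ β + ‖x - z‖ ^ β - 2 * ‖x‖ ^ β) * ‖z‖ ^ (-(n : ℝ) - 2 * s))) ∧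
    ∃ C : ℝ, ∀ x : EuclideanSpace ℝ (Fin n), x ≠ 0 →
      (∫ z : EuclideanSpace ℝ (Fin n),
        (‖x + z‖ ^ β + ‖x - z‖ ^ β - 2 * ‖x‖ ^ β) * ‖z‖ ^ (-(n : ℝ) - 2 * s))
      = C * ‖x‖ ^ (β - 2 * s) := by
  refine ⟨fun x hx => integrand_integrable hn s β hs1 hβ0 hβ2s x hx, ?_⟩
  set e : EuclideanSpace ℝ (Fin n) := EuclideanSpace.single ⟨0, hn⟩ 1 with he
  have hne : ‖e‖ = 1 := by simp [he]
  refine ⟨∫ z : EuclideanSpace ℝ (Fin n),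
        (‖e + z‖ ^ β + ‖e - z‖ ^ β - 2 * ‖e‖ ^ β) * ‖z‖ ^ (-(n : ℝ) - 2 * s), fun x hx => ?_⟩
  set ρ : ℝ := ‖x‖ with hρ
  have hρ0 : 0 < ρ := norm_pos_iff.2 hx
  have hnorm : ‖ρ • e‖ = ‖x‖ := by rw [norm_smul, hne, mul_one, hρ, norm_norm]
  set R := (Submodule.span ℝ {ρ • e - x})ᗮ.reflection with hR
  have hRx : R (ρ • e) = x := Submodule.reflection_sub hnorm
  rw [← R.measurePreserving.integral_comp R.toHomeomorph.measurableEmbedding]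
  have h1 := Measure.integral_comp_smul (volume : Measure (EuclideanSpace ℝ (Fin n)))
    (fun z => (‖x + R z‖ ^ β + ‖x - R z‖ ^ β - 2 * ρ ^ β) * ‖R z‖ ^ (-(n : ℝ) - 2 * s)) ρ
  have h2 : ∀ z : EuclideanSpace ℝ (Fin n),
      (‖x + R (ρ • z)‖ ^ β + ‖x - R (ρ • z)‖ ^ β - 2 * ρ ^ β) * ‖R (ρ • z)‖ ^ (-(n : ℝ) - 2 * s)
      = (ρ ^ β * ρ ^ (-(n : ℝ) - 2 * s)) *
        ((‖e + z‖ ^ β + ‖e - z‖ ^ β - 2 * ‖e‖ ^ β) * ‖z‖ ^ (-(n : ℝ) - 2 * s)) := by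
    intro z
    have a1 : ‖x + R (ρ • z)‖ = ρ * ‖e + z‖ := by
      conv_lhs => rw [← hRx]
      rw [← map_add, R.norm_map, ← smul_add, norm_smul, Real.norm_of_nonneg hρ0.le]
    have a2 : ‖x - R (ρ • z)‖ = ρ * ‖e - z‖ := by
      conv_lhs => rw [← hRx]
      rw [← map_sub, R.norm_map, ← smul_sub, norm_smul, Real.norm_of_nonneg hρ0.le]
    rw [a1, a2, R.norm_map, norm_smul, Real.norm_of_nonneg hρ0.le, hne,
      Real.mul_rpow hρ0.le (norm_nonneg _), Real.mul_rpow hρ0.le (norm_nonneg _),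
      Real.mul_rpow hρ0.le (norm_nonneg _), Real.one_rpow]
    ring
  simp only [h2] at h1
  rw [integral_const_mul, finrank_euclideanSpace_fin, abs_of_pos (by positivity), smul_eq_mul,
    eq_inv_mul_iff_mul_eq₀ (by positivity)] at h1
  refine Eq.trans h1.symm ?_
  rw [← mul_assoc, mul_comm]
  congr 1
  rw [← Real.rpow_natCast, ← Real.rpow_add hρ0, ← Real.rpow_add hρ0]
  congr 1
  ring

end
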